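/- Let α, β > −1 with α < β and α + β ≥ −1, and let n ≥ 1 be an integer. Then (−1)^{n−k} d_{k,n} > 0 for every integer k with 0 ≤ k ≤ n; in particular, the sequence {d_{k,n}}_{k=0}^{n} is alternating in sign. -/

import Mathlib

open Finset

/-- Pochhammer symbol `(a)_j = a (a+1) ⋯ (a+j-1)`. -/
noncomputable def poch (a : ℝ) (j : ℕ) : ℝ := ∏ i ∈ Finset.range j, (a + i)

/-- Generalized binomial coefficient `binom(a, m) = a (a-1) ⋯ (a-m+1) / m!`. -/
noncomputable def gbinom (a : ℝ) (m : ℕ) : ℝ :=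
  (∏ i ∈ Finset.range m, (a - i)) / (Nat.factorial m)

/-- Jacobi polynomial `P_n^{(α,β)}(x)` of a real variable. -/
noncomputable def jacobiP (α β : ℝ) (n : ℕ) (x : ℝ) : ℝ :=
  (1 / 2 ^ n) * ∑ k ∈ Finset.range (n + 1),
    gbinom ((n : ℝ) + α) (n - k) * gbinom ((n : ℝ) + β) k * (x - 1) ^ k * (x + 1) ^ (n - k)

/-- Jacobi polynomial `P_n^{(α,β)}(z)` of a complex variable. -/
noncomputable def jacobiC (α β : ℝ) (n : ℕ) (z : ℂ) : ℂ :=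
  (1 / 2 ^ n) * ∑ k ∈ Finset.range (n + 1),
    ((gbinom ((n : ℝ) + α) (n - k) * gbinom ((n : ℝ) + β) k : ℝ) : ℂ) *
      (z - 1) ^ k * (z + 1) ^ (n - k)

/-- Chebyshev-connection coefficients `d_{k,n}`, given by a terminating ₃F₂ sum. -/
noncomputable def dCoeff (α β : ℝ) (n k : ℕ) : ℝ :=
  (poch ((n : ℝ) + α + β + 1) k * poch ((k : ℝ) + α + 1) (n - k)) /
      ((Nat.factorial (n - k)) * 2 ^ (2 * k) * (Nat.factorial k)) *
    ∑ j ∈ Finset.range (n - k + 1),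
      (poch ((k : ℝ) - n) j * poch ((n : ℝ) + k + α + β + 1) j * poch ((k : ℝ) + 1 / 2) j) /
        (poch ((k : ℝ) + α + 1) j * poch (2 * (k : ℝ) + 1) j * (Nat.factorial j))

/-- The Bernstein ellipse `E_ρ`: the set of points `z = (u + u⁻¹)/2` with `|u| = ρ`. -/
def bernsteinEllipse (ρ : ℝ) : Set ℂ :=
  {z : ℂ | ∃ u : ℂ, ‖u‖ = ρ ∧ z = (u + u⁻¹) / 2}

/-!
With `a = k + α + 1`, `b = k + β + 1` and `m = n - k`, the sum in `d_{k,n}` is the expectation of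
the shifted Jacobi polynomial `p_m(x) = ₂F₁(-m, m + a + b - 1; a; x)` under the beta distribution
with both parameters equal to `k + 1/2`, since the `j`-th moment of the beta distribution with
parameters `g` and `h` is `(g)_j / (g + h)_j`. Its density is proportional to
`x ^ (g - 1) * (1 - x) ^ (h - 1)`, so integration by parts gives
`E[x (1 - x) q' + (g - (g + h) x) q] = 0` for every polynomial `q`. For `q = p_m` both `x q` and
`x (1 - x) q'` are combinations of `p_{m+1}`, `p_m` and `p_{m-1}`. Under the hypotheses on the
parameters, the resulting three-term recurrence expresses `E[p_{m+1}]` as a negative multiple of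
`E[p_m]` plus a nonnegative multiple of `E[p_{m-1}]`, so the signs alternate.
-/

section Pochhammer

lemma poch_zero (x : ℝ) : poch x 0 = 1 := Finset.prod_range_zero _

lemma poch_succ (x : ℝ) (j : ℕ) : poch x (j + 1) = poch x j * (x + j) :=
  Finset.prod_range_succ _ j

lemma poch_succ_left (x : ℝ) (j : ℕ) : poch x (j + 1) = x * poch (x + 1) j := by
  simp only [poch, Finset.prod_range_succ', Nat.cast_add, Nat.cast_one, Nat.cast_zero, add_zero,
    add_assoc, add_comm (1 : ℝ), mul_comm x]

lemma poch_add_one_eq_div {x : ℝ} (hx : x ≠ 0) (j : ℕ) :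
    poch (x + 1) j = poch x j * (x + j) / x := by
  rw [eq_div_iff hx, mul_comm, ← poch_succ_left, poch_succ]

lemma poch_pos {x : ℝ} (hx : 0 < x) (j : ℕ) : 0 < poch x j :=
  Finset.prod_pos fun i _ => by positivity

lemma poch_neg_natCast_eq_zero {n j : ℕ} (hnj : n < j) : poch (-n) j = 0 :=
  Finset.prod_eq_zero (Finset.mem_range.mpr hnj) (neg_add_cancel _)

end Pochhammer

section ShiftedJacobi

open Polynomial

lemma coeff_X_mul_one_sub_X_mul_derivative {R : Type*} [CommRing R] (q : R[X]) (j : ℕ) :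
    (X * (1 - X) * derivative q).coeff (j + 1) = (j + 1) * q.coeff (j + 1) - j * q.coeff j := by
  rw [mul_assoc, coeff_X_mul, sub_mul, one_mul, coeff_sub, coeff_derivative]
  cases j <;> simp [coeff_derivative, mul_comm]

variable {a b : ℝ}

/-- The coefficient of `x ^ j` in `₂F₁(-n, n + a + b - 1; a; x)`; it vanishes for `n < j`. -/
noncomputable def shiftedJacobiCoeff (a b : ℝ) (n j : ℕ) : ℝ :=
  poch (-n) j * poch (n + a + b - 1) j / (poch a j * j.factorial)

/-- The shifted Jacobi polynomial `₂F₁(-n, n + a + b - 1; a; x)`, orthogonal on `[0, 1]` with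
respect to the weight `x ^ (a - 1) * (1 - x) ^ (b - 1)` and normalized to the value `1` at `0`. -/
noncomputable def shiftedJacobi (a b : ℝ) (n : ℕ) : ℝ[X] :=
  ∑ j ∈ Finset.range (n + 1), monomial j (shiftedJacobiCoeff a b n j)

/-- Minus the coefficient of `shiftedJacobi a b (n + 2)` in the expansion of
`x * shiftedJacobi a b (n + 1)`. -/
noncomputable def shiftedJacobiUp (a b : ℝ) (n : ℕ) : ℝ :=
  (n + a + b) * (n + 1 + a) / ((2 * n + a + b + 1) * (2 * n + a + b + 2))

/-- Minus the coefficient of `shiftedJacobi a b n` in the expansion of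
`x * shiftedJacobi a b (n + 1)`. -/
noncomputable def shiftedJacobiDown (a b : ℝ) (n : ℕ) : ℝ :=
  (n + 1) * (n + b) / ((2 * n + a + b) * (2 * n + a + b + 1))

lemma shiftedJacobiUp_pos (ha : 0 < a) (hb : 0 < b) (n : ℕ) : 0 < shiftedJacobiUp a b n := by
  unfold shiftedJacobiUp
  positivity

lemma shiftedJacobiDown_pos (ha : 0 < a) (hb : 0 < b) (n : ℕ) : 0 < shiftedJacobiDown a b n := by
  unfold shiftedJacobiDown
  positivity

lemma shiftedJacobiCoeff_zero (a b : ℝ) (n : ℕ) : shiftedJacobiCoeff a b n 0 = 1 := by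
  simp [shiftedJacobiCoeff, poch_zero]

lemma shiftedJacobiCoeff_eq_zero (a b : ℝ) {n j : ℕ} (hnj : n < j) :
    shiftedJacobiCoeff a b n j = 0 := by
  simp [shiftedJacobiCoeff, poch_neg_natCast_eq_zero hnj]

lemma coeff_shiftedJacobi (a b : ℝ) (n j : ℕ) :
    (shiftedJacobi a b n).coeff j = shiftedJacobiCoeff a b n j := by
  simp only [shiftedJacobi, finsetSum_coeff, coeff_monomial, Finset.sum_ite_eq', Finset.mem_range,
    Order.lt_add_one_iff, ite_eq_left_iff, not_le]
  exact fun hnj => (shiftedJacobiCoeff_eq_zero a b hnj).symm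

-- This lemma at `n + 1` and the next two express the coefficients of `x ^ (j + 1)` in degrees
-- `n + 1`, `n + 2` and `n` through that of `x ^ j` in degree `n + 1`. No factor vanishing for
-- special `j` is divided by, so relations between the three polynomials reduce to identities of
-- rational functions.
lemma shiftedJacobiCoeff_succ (a b : ℝ) (n j : ℕ) :
    shiftedJacobiCoeff a b n (j + 1) =
      (j - n) * (n + a + b - 1 + j) / ((a + j) * (j + 1)) * shiftedJacobiCoeff a b n j := by
  simp only [shiftedJacobiCoeff, poch_succ, Nat.factorial_succ, Nat.cast_mul, Nat.cast_succ,
    div_eq_mul_inv, mul_inv]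
  ring

lemma shiftedJacobiCoeff_add_two_succ {n : ℕ} (hn : n + a + b ≠ 0) (j : ℕ) :
    shiftedJacobiCoeff a b (n + 2) (j + 1) =
      -((n + 2) * (n + a + b + j) * (n + a + b + 1 + j)) / ((n + a + b) * (a + j) * (j + 1)) *
        shiftedJacobiCoeff a b (n + 1) j := by
  have lower : poch (-(n + 2 : ℕ)) (j + 1) = -(n + 2) * poch (-(n + 1 : ℕ)) j := by
    rw [poch_succ_left]
    push_cast
    ring_nf
  have upper : poch ((n + 2 : ℕ) + a + b - 1) (j + 1) =
      (n + a + b + j) * (n + a + b + 1 + j) / (n + a + b) * poch ((n + 1 : ℕ) + a + b - 1) j := by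
    rw [show ((n + 2 : ℕ) + a + b - 1 : ℝ) = n + a + b + 1 by push_cast; ring,
      show ((n + 1 : ℕ) + a + b - 1 : ℝ) = n + a + b by push_cast; ring,
      poch_succ, poch_add_one_eq_div hn]
    ring
  rw [shiftedJacobiCoeff, lower, upper, shiftedJacobiCoeff, poch_succ, Nat.factorial_succ]
  simp only [Nat.cast_mul, Nat.cast_succ, div_eq_mul_inv, mul_inv]
  ring

lemma shiftedJacobiCoeff_succ_eq_mul_add_one (a b : ℝ) (n j : ℕ) :
    shiftedJacobiCoeff a b n (j + 1) =
      (n + 1 - j) * (j - n) * (n + a + b - 1) / ((n + 1) * (a + j) * (j + 1)) *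
        shiftedJacobiCoeff a b (n + 1) j := by
  have lower : poch (-n) (j + 1) = (n + 1 - j) * (j - n) / (n + 1) * poch (-(n + 1 : ℕ)) j := by
    rw [show (-n : ℝ) = -(n + 1 : ℕ) + 1 by push_cast; ring, poch_succ,
      poch_add_one_eq_div (neg_ne_zero.mpr (by positivity))]
    push_cast
    field_simp
    ring
  have upper : poch (n + a + b - 1) (j + 1) =
      (n + a + b - 1) * poch ((n + 1 : ℕ) + a + b - 1) j := by
    rw [poch_succ_left]
    push_cast
    ring_nf
  rw [shiftedJacobiCoeff, lower, upper, shiftedJacobiCoeff, poch_succ, Nat.factorial_succ]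
  simp only [Nat.cast_mul, Nat.cast_succ, div_eq_mul_inv, mul_inv]
  ring

theorem X_mul_shiftedJacobi (ha : 0 < a) (hb : 0 < b) (n : ℕ) :
    X * shiftedJacobi a b (n + 1) =
      shiftedJacobiUp a b n • (shiftedJacobi a b (n + 1) - shiftedJacobi a b (n + 2)) +
      shiftedJacobiDown a b n • (shiftedJacobi a b (n + 1) - shiftedJacobi a b n) := by
  ext (_ | j)
  · simp [coeff_shiftedJacobi, shiftedJacobiCoeff_zero]
  · simp only [coeff_X_mul, coeff_add, coeff_sub, coeff_smul, smul_eq_mul, coeff_shiftedJacobi]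
    rw [shiftedJacobiCoeff_add_two_succ (by positivity), shiftedJacobiCoeff_succ a b (n + 1),
      shiftedJacobiCoeff_succ_eq_mul_add_one a b n, shiftedJacobiUp, shiftedJacobiDown]
    push_cast
    field_simp
    ring

theorem X_mul_one_sub_X_mul_derivative_shiftedJacobi (ha : 0 < a) (hb : 0 < b) (n : ℕ) :
    X * (1 - X) * derivative (shiftedJacobi a b (n + 1)) =
      ((n + 1) * shiftedJacobiUp a b n) •
        (shiftedJacobi a b (n + 2) - shiftedJacobi a b (n + 1)) +
      ((n + a + b) * shiftedJacobiDown a b n) •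
        (shiftedJacobi a b (n + 1) - shiftedJacobi a b n) := by
  ext (_ | j)
  · simp [coeff_shiftedJacobi, shiftedJacobiCoeff_zero, mul_assoc]
  · simp only [coeff_X_mul_one_sub_X_mul_derivative, coeff_add, coeff_sub, coeff_smul, smul_eq_mul,
      coeff_shiftedJacobi]
    rw [shiftedJacobiCoeff_add_two_succ (by positivity), shiftedJacobiCoeff_succ a b (n + 1),
      shiftedJacobiCoeff_succ_eq_mul_add_one a b n, shiftedJacobiUp, shiftedJacobiDown]
    push_cast
    field_simp
    ring

end ShiftedJacobi

section BetaExpectation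

open Polynomial

variable {g h : ℝ}

/-- The `j`-th moment of the beta distribution with parameters `g` and `h`. -/
noncomputable def betaMoment (g h : ℝ) (j : ℕ) : ℝ := poch g j / poch (g + h) j

/-- The expectation of a polynomial under the beta distribution with parameters `g` and `h`, defined
through the moments so that no integral is needed. -/
noncomputable def betaExpectation (g h : ℝ) : ℝ[X] →ₗ[ℝ] ℝ :=
  lsum fun j => LinearMap.mulRight ℝ (betaMoment g h j)

lemma betaMoment_succ (hgh : 0 < g + h) (j : ℕ) :
    (g + h + j) * betaMoment g h (j + 1) = (g + j) * betaMoment g h j := by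
  have := poch_pos hgh j
  have : 0 < g + h + j := by positivity
  simp only [betaMoment, poch_succ]
  field_simp

lemma betaExpectation_monomial (g h : ℝ) (j : ℕ) (r : ℝ) :
    betaExpectation g h (monomial j r) = r * betaMoment g h j := by
  simp [betaExpectation, lsum_apply, sum_monomial_index]

theorem betaExpectation_pearson (hgh : 0 < g + h) (q : ℝ[X]) :
    betaExpectation g h (X * (1 - X) * derivative q) + g * betaExpectation g h q -
      (g + h) * betaExpectation g h (X * q) = 0 := by
  induction q using Polynomial.induction_on' with
  | add p q hp hq =>
    simp only [map_add, mul_add]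
    linear_combination hp + hq
  | monomial j r =>
    have derivative_term : X * (1 - X) * derivative (monomial j r) =
        monomial j (j * r) - monomial (j + 1) (j * r) := by
      cases j with
      | zero => simp
      | succ i => simp [mul_sub, sub_mul, X_mul_monomial, mul_assoc, mul_comm]
    rw [derivative_term, X_mul_monomial, map_sub]
    simp only [betaExpectation_monomial]
    linear_combination -r * betaMoment_succ hgh j

end BetaExpectation

section BetaExpectationShiftedJacobi

variable {a b g h : ℝ}

theorem betaExpectation_shiftedJacobi (a b g h : ℝ) (n : ℕ) :
    betaExpectation g h (shiftedJacobi a b n) =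
      ∑ j ∈ Finset.range (n + 1), shiftedJacobiCoeff a b n j * betaMoment g h j := by
  simp only [shiftedJacobi, map_sum, betaExpectation_monomial]

lemma betaExpectation_shiftedJacobi_zero (a b g h : ℝ) :
    betaExpectation g h (shiftedJacobi a b 0) = 1 := by
  simp [betaExpectation_shiftedJacobi, shiftedJacobiCoeff_zero, betaMoment, poch_zero]

lemma betaExpectation_shiftedJacobi_one (b : ℝ) (ha : a ≠ 0) (hgh : g + h ≠ 0) :
    betaExpectation g h (shiftedJacobi a b 1) = -((b * g - a * h) / (a * (g + h))) := by
  simp only [betaExpectation_shiftedJacobi, Finset.sum_range_succ, Finset.sum_range_zero,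
    shiftedJacobiCoeff, betaMoment, poch_succ, poch_zero, Nat.factorial, Nat.cast_one,
    Nat.cast_zero, zero_add, add_zero, one_mul, mul_one]
  field_simp
  ring

/-- Minus the coefficient of `E[p_{n+1}]` in the recurrence expressing `E[p_{n+2}]` through
`E[p_{n+1}]` and `E[p_n]`, where `p_n = shiftedJacobi a b n` and `E = betaExpectation g h`, written
so that its sign is visible. -/
noncomputable def expectationMiddle (a b g h : ℝ) (n : ℕ) : ℝ :=
  (g - h) / 2 + (b - a) *
    (2 * n * (n + 1 + (a + b)) + 2 * (a + b - (g + h)) + (g + h) * (a + b)) /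
    (2 * ((2 * n + a + b) * (2 * n + a + b + 2)))

lemma expectationMiddle_eq (ha : 0 < a) (hb : 0 < b) (g h : ℝ) (n : ℕ) :
    expectationMiddle a b g h n =
      g - (n + 1 + (g + h)) * shiftedJacobiUp a b n +
        (n + (a + b - (g + h))) * shiftedJacobiDown a b n := by
  unfold expectationMiddle shiftedJacobiUp shiftedJacobiDown
  field_simp
  ring

lemma expectationMiddle_pos (ha : 0 < a) (hab : a < b) (hh : 0 < h) (hhg : h ≤ g)
    (hsum : g + h ≤ a + b) (n : ℕ) : 0 < expectationMiddle a b g h n := by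
  have hb : 0 < b := ha.trans hab
  have hg : 0 < g := hh.trans_le hhg
  have bracket_pos :
      0 < 2 * n * (n + 1 + (a + b)) + 2 * (a + b - (g + h)) + (g + h) * (a + b) :=
    add_pos_of_nonneg_of_pos (add_nonneg (by positivity) (by linarith)) (by positivity)
  exact add_pos_of_nonneg_of_pos (by linarith)
    (div_pos (mul_pos (sub_pos.mpr hab) bracket_pos) (by positivity))

theorem betaExpectation_shiftedJacobi_add_two (ha : 0 < a) (hb : 0 < b) (hgh : 0 < g + h)
    (n : ℕ) :
    (n + 1 + (g + h)) * shiftedJacobiUp a b n * betaExpectation g h (shiftedJacobi a b (n + 2)) =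
      -expectationMiddle a b g h n * betaExpectation g h (shiftedJacobi a b (n + 1)) +
      (n + (a + b - (g + h))) * shiftedJacobiDown a b n *
        betaExpectation g h (shiftedJacobi a b n) := by
  have pearson := betaExpectation_pearson hgh (shiftedJacobi a b (n + 1))
  rw [X_mul_one_sub_X_mul_derivative_shiftedJacobi ha hb, X_mul_shiftedJacobi ha hb] at pearson
  simp only [map_add, map_sub, map_smul, smul_eq_mul] at pearson
  rw [expectationMiddle_eq ha hb]
  linear_combination pearson

theorem neg_one_pow_mul_betaExpectation_shiftedJacobi_pos (ha : 0 < a) (hab : a < b) (hh : 0 < h)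
    (hhg : h ≤ g) (hsum : g + h ≤ a + b) (n : ℕ) :
    0 < (-1) ^ n * betaExpectation g h (shiftedJacobi a b n) := by
  have hb : 0 < b := ha.trans hab
  have hgh : 0 < g + h := add_pos (hh.trans_le hhg) hh
  induction n using Nat.twoStepInduction with
  | zero => simp [betaExpectation_shiftedJacobi_zero]
  | one =>
    have num_pos : 0 < b * g - a * h := sub_pos.mpr (mul_lt_mul hab hhg hh hb.le)
    rw [betaExpectation_shiftedJacobi_one b ha.ne' hgh.ne', pow_one, neg_one_mul, neg_neg]
    exact div_pos num_pos (mul_pos ha hgh)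
  | more n ih_n ih_succ =>
    have up_pos : 0 < (n + 1 + (g + h)) * shiftedJacobiUp a b n :=
      mul_pos (by positivity) (shiftedJacobiUp_pos ha hb n)
    have middle_pos : 0 < expectationMiddle a b g h n :=
      expectationMiddle_pos ha hab hh hhg hsum n
    have down_nonneg : 0 ≤ (n + (a + b - (g + h))) * shiftedJacobiDown a b n :=
      mul_nonneg (add_nonneg n.cast_nonneg (sub_nonneg.mpr hsum)) (shiftedJacobiDown_pos ha hb n).le
    have signed_recurrence :
        (n + 1 + (g + h)) * shiftedJacobiUp a b n *
            ((-1) ^ (n + 2) * betaExpectation g h (shiftedJacobi a b (n + 2))) =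
          expectationMiddle a b g h n *
            ((-1) ^ (n + 1) * betaExpectation g h (shiftedJacobi a b (n + 1))) +
          (n + (a + b - (g + h))) * shiftedJacobiDown a b n *
            ((-1) ^ n * betaExpectation g h (shiftedJacobi a b n)) := by
      rw [pow_succ, pow_succ]
      linear_combination (-1) ^ n * betaExpectation_shiftedJacobi_add_two ha hb hgh n
    refine pos_of_mul_pos_right ?_ up_pos.le
    rw [signed_recurrence]
    exact add_pos_of_pos_of_nonneg (mul_pos middle_pos ih_succ) (mul_nonneg down_nonneg ih_n.le)

end BetaExpectationShiftedJacobi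

theorem dCoeff_eq_mul_betaExpectation (α β : ℝ) {n k : ℕ} (hk : k ≤ n) :
    dCoeff α β n k =
      poch (n + α + β + 1) k * poch (k + α + 1) (n - k) /
          ((n - k).factorial * 2 ^ (2 * k) * k.factorial) *
        betaExpectation (k + 1 / 2) (k + 1 / 2)
          (shiftedJacobi (k + α + 1) (k + β + 1) (n - k)) := by
  rw [dCoeff, betaExpectation_shiftedJacobi]
  congr 1
  refine Finset.sum_congr rfl fun j _ => ?_
  have lower : -((n - k : ℕ) : ℝ) = k - n := by push_cast [hk]; ring
  have upper : ((n - k : ℕ) : ℝ) + (k + α + 1) + (k + β + 1) - 1 = n + k + α + β + 1 := by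
    push_cast [hk]; ring
  have denom : (k + 1 / 2 : ℝ) + (k + 1 / 2) = 2 * k + 1 := by ring
  rw [shiftedJacobiCoeff, betaMoment, lower, upper, denom]
  ring

/-- if `α < β` and `α + β ≥ -1`, then `(-1)^(n-k) d_{k,n} > 0`, i.e. the sequence
`{d_{k,n}}_{k=0}^{n}` is alternating in sign. -/
theorem dCoeff_alternating
    (α β : ℝ) (hα : -1 < α) (hβ : -1 < β) (hab : α < β) (hsum : -1 ≤ α + β)
    (n : ℕ) (hn : 1 ≤ n) (k : ℕ) (hk0 : 0 ≤ k) (hk : k ≤ n) :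
    0 < (-1 : ℝ) ^ (n - k) * dCoeff α β n k := by
  have : (0 : ℝ) ≤ k := k.cast_nonneg
  have hn_one : (1 : ℝ) ≤ n := by exact_mod_cast hn
  have expectation_sign : 0 < (-1) ^ (n - k) *
      betaExpectation (k + 1 / 2) (k + 1 / 2) (shiftedJacobi (k + α + 1) (k + β + 1) (n - k)) :=
    neg_one_pow_mul_betaExpectation_shiftedJacobi_pos (by linarith) (by linarith) (by linarith)
      le_rfl (by linarith) (n - k)
  have hupper : 0 < poch (n + α + β + 1) k := poch_pos (by linarith) k
  have hlower : 0 < poch (k + α + 1) (n - k) := poch_pos (by linarith) (n - k)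
  rw [dCoeff_eq_mul_betaExpectation α β hk, mul_left_comm]
  exact mul_pos (by positivity) expectation_sign
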